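/- Let F be a field of characteristic 2 and φ, ψ nondefective quadratic forms over F. Let 𝓔 be the class of all field extensions E/F satisfying i_d(φ_E) = 0 in case ψ is quasilinear, and the class of all field extensions E/F otherwise. If φ_{F(ψ)} is isotropic, then D_E^*(ψ)² ⊆ D_E^*(φ)² for every E ∈ 𝓔. -/

import Mathlib

/-!
The proof is a specialization argument in the style of Knebusch's norm principle; it works for
every extension `E/F`, whether or not `ψ` is quasilinear.

If `φ_E` has an isotropic vector outside the radical of its polar form, it is universal
(`exists_eval_eq_of_isotropic`) and there is nothing to prove. Otherwise all isotropic vectors of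
`φ_E` are radical; since `φ` is nondefective over `F`, it is anisotropic over `F`, and therefore
`ψ` is irreducible.

Generic step (`generic_similarity`). Isotropy over `F(ψ)` gives a polynomial vector `f`, not
divisible by `ψ`, with `ψ ∣ φ(f)`. Substituting `X T + Y` and pseudo-dividing by
`p(T) = ψ(X T + Y) = ψ(X) T² + b_ψ(X, Y) T + ψ(Y)` yields a remainder `r₀ + r₁ T` with
`φ(r₀ + r₁ T) = l p(T)`, where `l` has degree `0` in `T`. Setting `T = 0` shows that the remainder
is not zero, so `l ≠ 0` because `φ` is anisotropic over `F[X, Y]`. Comparing coefficients,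
`φ(r₁) = l ψ(X)` and `φ(r₀) = l ψ(Y)`.

Specialization (`specialize_similarity`). Given `v, w` over `E`, choose a curve `u` over `E[ε]`
through `(v, w)` at `ε = 0` along which `l` does not vanish identically. As isotropic vectors of
`φ_E` are radical, the lowest coefficient of any nonzero value of `φ` over `E[ε]` is a value of `φ`
over `E` (`trailingCoeff_eval_mem_reps`). Hence, with `t` the lowest coefficient of `l(u)`, both
`t ψ(v)` and `t ψ(w)` are values of `φ_E`, and `ψ(v) ψ(w)` is their product divided by `t²`.
-/


/-!
Background definitions for quadratic forms over fields of characteristic 2,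
following the conventions of "Isotropy of quadratic forms over function fields
in characteristic 2".  A quadratic form of dimension `n` over a commutative ring
`R` is represented by a coefficient matrix `c : ι → ι → R` (`ι` a finite index
type), the associated quadratic map being `x ↦ ∑ i j, c i j * x i * x j`; every
quadratic form on a finite-dimensional vector space (a map satisfying
`φ(av) = a²φ(v)` whose polar form is bilinear) arises this way.
-/

open scoped BigOperators Pointwise Classical

namespace QF2

variable {R S : Type*} [CommRing R] [CommRing S] {ι κ : Type} [Fintype ι] [Fintype κ]

/-- The value at `x` of the quadratic form with coefficient matrix `c`, namely
`∑ i j, c i j * x i * x j`. -/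
def eval (c : ι → ι → R) (x : ι → R) : R := ∑ i, ∑ j, c i j * x i * x j

/-- The polar form `b(x,y) = q(x+y) - q(x) - q(y)` of the quadratic form `c`. -/
def polar (c : ι → ι → R) (x y : ι → R) : R := ∑ i, ∑ j, c i j * (x i * y j + x j * y i)

/-- A quadratic form is isotropic if it vanishes on a nonzero vector. -/
def IsIsotropic (c : ι → ι → R) : Prop := ∃ x : ι → R, x ≠ 0 ∧ eval c x = 0

/-- Anisotropic: not isotropic. -/
abbrev IsAnisotropic (c : ι → ι → R) : Prop := ¬ IsIsotropic c

/-- Base change of a quadratic form along a ring homomorphism. -/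
def map (σ : R →+* S) (c : ι → ι → R) : ι → ι → S := fun i j => σ (c i j)

/-- Quasilinear (totally singular): the polar form vanishes identically. -/
def IsQuasilinear (c : ι → ι → R) : Prop := ∀ x y : ι → R, polar c x y = 0

/-- Nondefective (quasilinear index `i_d = 0`): no nonzero vector of the radical of the
polar form is isotropic. -/
def IsNondefective (c : ι → ι → R) : Prop :=
  ∀ x : ι → R, (∀ y, polar c x y = 0) → eval c x = 0 → x = 0

/-- `d` is isometric to `c`. -/
def Isometric (c : ι → ι → R) (d : κ → κ → R) : Prop :=
  ∃ g : (κ → R) ≃ₗ[R] (ι → R), ∀ x, eval d x = eval c (g x)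

/-- `D_R^*(c)`: the set of nonzero represented elements. -/
def reps (c : ι → ι → R) : Set R := {a | a ≠ 0 ∧ ∃ x : ι → R, eval c x = a}

/-- `D_R^*(c)^m`: products of `m` nonzero represented elements. -/
def repsPow (c : ι → ι → R) (m : ℕ) : Set R :=
  {a | ∃ v : Fin m → R, (∀ k, v k ∈ reps c) ∧ a = ∏ k, v k}

/-- The multiplicative subgroup of `F^*` generated by a set `s` of nonzero elements,
realized as a subset of `F` (products of elements of `s` and their inverses). -/
def genBy {F : Type*} [Field F] (s : Set F) : Set F :=
  ↑(Submonoid.closure (s ∪ Inv.inv '' s))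

/-- `⟨D_F^*(c)⟩`: the subgroup generated by the nonzero represented elements. -/
def genGroup {F : Type*} [Field F] (c : ι → ι → F) : Set F := genBy (reps c)

/-- `⟨D_F^*(c)²⟩`. -/
def genGroup2 {F : Type*} [Field F] (c : ι → ι → F) : Set F := genBy (repsPow c 2)

/-- The scaled quadratic form `a·c`. -/
def smulQF (a : R) (c : ι → ι → R) : ι → ι → R := fun i j => a * c i j

/-- Orthogonal sum of two quadratic forms. -/
def orthSum (c : ι → ι → R) (d : κ → κ → R) : (ι ⊕ κ) → (ι ⊕ κ) → R
  | Sum.inl i, Sum.inl j => c i j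
  | Sum.inr i, Sum.inr j => d i j
  | _, _ => 0

lemma eval_add (c : ι → ι → R) (x y : ι → R) :
    eval c (x + y) = eval c x + eval c y + polar c x y := by
  unfold eval polar
  rw [← Finset.sum_add_distrib, ← Finset.sum_add_distrib]
  refine Finset.sum_congr rfl fun i _ => ?_
  rw [← Finset.sum_add_distrib, ← Finset.sum_add_distrib]
  refine Finset.sum_congr rfl fun j _ => ?_
  simp only [Pi.add_apply]; ring

lemma polar_add_left (c : ι → ι → R) (x x' y : ι → R) :
    polar c (x + x') y = polar c x y + polar c x' y := by
  unfold polar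
  rw [← Finset.sum_add_distrib]
  refine Finset.sum_congr rfl fun i _ => ?_
  rw [← Finset.sum_add_distrib]
  refine Finset.sum_congr rfl fun j _ => ?_
  simp only [Pi.add_apply]; ring

lemma polar_smul_left (c : ι → ι → R) (a : R) (x y : ι → R) :
    polar c (a • x) y = a * polar c x y := by
  unfold polar
  rw [Finset.mul_sum]
  refine Finset.sum_congr rfl fun i _ => ?_
  rw [Finset.mul_sum]
  refine Finset.sum_congr rfl fun j _ => ?_
  simp only [Pi.smul_apply, smul_eq_mul]; ring

lemma eval_smul (c : ι → ι → R) (a : R) (x : ι → R) :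
    eval c (a • x) = a ^ 2 * eval c x := by
  unfold eval
  rw [Finset.mul_sum]
  refine Finset.sum_congr rfl fun i _ => ?_
  rw [Finset.mul_sum]
  refine Finset.sum_congr rfl fun j _ => ?_
  simp only [Pi.smul_apply, smul_eq_mul]; ring

/-- The defect of a quadratic form: the submodule of isotropic vectors lying in the
radical of the polar form. -/
def defectSubmodule (c : ι → ι → R) : Submodule R (ι → R) where
  carrier := {x | (∀ y, polar c x y = 0) ∧ eval c x = 0}
  zero_mem' := by
    constructor
    · intro y; unfold polar; simp
    · unfold eval; simp
  add_mem' := by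
    rintro x x' ⟨hx1, hx2⟩ ⟨hx1', hx2'⟩
    refine ⟨fun y => ?_, ?_⟩
    · rw [polar_add_left, hx1 y, hx1' y, add_zero]
    · rw [eval_add, hx2, hx2', hx1 x', add_zero, add_zero]
  smul_mem' := by
    rintro a x ⟨hx1, hx2⟩
    refine ⟨fun y => ?_, ?_⟩
    · rw [polar_smul_left, hx1 y, mul_zero]
    · rw [eval_smul, hx2, mul_zero]

/-- The quasilinear index (defect) `i_d` of a quadratic form. -/
noncomputable def defectIndex (c : ι → ι → R) : ℕ :=
  Module.finrank R (defectSubmodule c)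

/-- The total isotropy index `i_t`: the dimension of a maximal totally isotropic
subspace. -/
noncomputable def totalIndex (c : ι → ι → R) : ℕ :=
  sSup {m | ∃ W : Submodule R (ι → R), (∀ x ∈ W, eval c x = 0) ∧ Module.finrank R W = m}

/-- The Witt index `i_W = i_t - i_d`. -/
noncomputable def wittIndex (c : ι → ι → R) : ℕ := totalIndex c - defectIndex c

variable {F : Type u} [Field F]

/-- The homogeneous quadratic polynomial `φ(X_1, …, X_n)` attached to a quadratic form. -/
noncomputable def poly (c : ι → ι → F) : MvPolynomial ι F :=
  ∑ i, ∑ j, MvPolynomial.C (c i j) * (MvPolynomial.X i * MvPolynomial.X j)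

/-- The canonical map from `F` to the total fraction ring of `A/(f)`; when `f` is
irreducible, the target is the function field `F(f)`. -/
noncomputable def ffHom {A : Type*} [CommRing A] (σ : F →+* A) (f : A) :
    F →+* FractionRing (A ⧸ Ideal.span {f}) :=
  (algebraMap (A ⧸ Ideal.span {f}) (FractionRing (A ⧸ Ideal.span {f}))).comp
    ((Ideal.Quotient.mk (Ideal.span {f})).comp σ)

/-- The canonical map from `R` into (the total fraction ring of) `R[X_i : i ∈ κ]`;
for a field this is the inclusion into the rational function field `F(X_i : i ∈ κ)`. -/
noncomputable def ratHom (κ : Type) (R : Type*) [CommRing R] :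
    R →+* FractionRing (MvPolynomial κ R) :=
  (algebraMap (MvPolynomial κ R) (FractionRing (MvPolynomial κ R))).comp MvPolynomial.C

/-- The canonical map from `F` into the rational function field `F(X)`. -/
noncomputable def ratHom1 (F : Type u) [Field F] : F →+* FractionRing (Polynomial F) :=
  (algebraMap (Polynomial F) (FractionRing (Polynomial F))).comp Polynomial.C

/-- `φ_{F(ψ)}` is isotropic, where `F(ψ)` is the function field of the quadratic form `ψ`.
When the polynomial of `ψ` is irreducible this is the quotient field of `F[X]/(ψ(X))`;
otherwise (`ψ ≅ ⟨a⟩`, `ψ ≅ ℍ`, or degenerate defective cases) `F(ψ)` is a purely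
transcendental extension of `F`, over which isotropy is equivalent to isotropy over `F`. -/
def IsotropicOverFunField (c : ι → ι → F) (d : κ → κ → F) : Prop :=
  (Irreducible (poly d) → IsIsotropic (map (ffHom MvPolynomial.C (poly d)) c)) ∧
  (¬ Irreducible (poly d) → IsIsotropic c)

/-- Stable birational equivalence of (nondefective) quadratic forms:
`φ_{F(ψ)}` and `ψ_{F(φ)}` are both isotropic. -/
def StbEquiv (c : ι → ι → F) (d : κ → κ → F) : Prop :=
  IsotropicOverFunField c d ∧ IsotropicOverFunField d c

/-- The leading coefficient of a multivariate polynomial with respect to the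
lexicographic ordering on monomials. -/
noncomputable def lexLC {l : ℕ} {F : Type*} [CommSemiring F] (f : MvPolynomial (Fin l) F) : F :=
  if h : f = 0 then 0
  else f.coeff (ofLex ((f.support.image (toLex : (Fin l →₀ ℕ) → Lex (Fin l →₀ ℕ))).max'
    (Finset.Nonempty.image (MvPolynomial.support_nonempty.mpr h) _)))

/-- The coefficient matrix of the tensor product `π ⊗ φ` of the bilinear Pfister form
`π = ⟨⟨a 1, …, a n⟩⟩_b` with the quadratic form `c` (with respect to the standard basis,
`π ⊗ φ ≅ ⊥_{S ⊆ {1,…,n}} (∏_{i ∈ S} a i) φ`). -/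
def pfisterMul {n : ℕ} (a : Fin n → R) (c : ι → ι → R) :
    ((Fin n → Bool) × ι) → ((Fin n → Bool) × ι) → R :=
  fun p q =>
    if p.1 = q.1 then (∏ i, if p.1 i then a i else 1) * c p.2 q.2 else 0


/-! ### Base change and pseudo-division -/

section General

variable {R S : Type*} [CommRing R] [CommRing S] {ι κ : Type} [Fintype ι] [Fintype κ]

lemma map_eval (τ : R →+* S) (c : ι → ι → R) (x : ι → R) :
    τ (eval c x) = eval (map τ c) (fun i => τ (x i)) := by
  simp [eval, map]

lemma map_polar (τ : R →+* S) (c : ι → ι → R) (x y : ι → R) :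
    τ (polar c x y) = polar (map τ c) (fun i => τ (x i)) (fun i => τ (y i)) := by
  simp [polar, map]

lemma polar_comm (c : ι → ι → R) (x y : ι → R) : polar c x y = polar c y x := by
  unfold polar
  exact Finset.sum_congr rfl fun i _ => Finset.sum_congr rfl fun j _ => by ring

lemma polar_zero_right (c : ι → ι → R) (x : ι → R) : polar c x 0 = 0 := by simp [polar]

lemma poly_eq_eval {F : Type*} [Field F] (d : κ → κ → F) :
    poly d = eval (map MvPolynomial.C d) (fun k => MvPolynomial.X k) := by
  simp [poly, eval, map, mul_assoc]

lemma eval₂Hom_poly {F : Type*} [Field F] (d : κ → κ → F) (τ : F →+* S) (x : κ → S) :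
    MvPolynomial.eval₂Hom τ x (poly d) = eval (map τ d) x := by
  rw [poly_eq_eval, map_eval]
  congr 1
  · funext i j; simp [map]
  · funext i; simp

open Polynomial in
/-- Pseudo-division by a quadratic polynomial, with the same power of the leading coefficient for
all members of a finite family. -/
lemma pseudo_div (a b e : R) (f : ι → R[X]) :
    ∃ (N : ℕ) (q : ι → R[X]) (r₀ r₁ : ι → R), ∀ i,
      C (a ^ N) * f i = q i * (C a * X ^ 2 + C b * X + C e) + (C (r₀ i) + C (r₁ i) * X) := by
  have key : ∀ g : R[X], ∃ (N : ℕ) (q : R[X]) (s t : R),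
      C (a ^ N) * g = q * (C a * X ^ 2 + C b * X + C e) + (C s + C t * X) := by
    intro g
    induction g using Polynomial.induction_on' with
    | add g h hg hh =>
      obtain ⟨N, q, s, t, h1⟩ := hg
      obtain ⟨N', q', s', t', h2⟩ := hh
      refine ⟨N + N', C (a ^ N') * q + C (a ^ N) * q', a ^ N' * s + a ^ N * s',
        a ^ N' * t + a ^ N * t', ?_⟩
      simp only [pow_add, C_mul, C_add]
      linear_combination C (a ^ N') * h1 + C (a ^ N) * h2
    | monomial n m =>
      induction n with
      | zero => exact ⟨0, 0, m, 0, by simp⟩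
      | succ n ih =>
        obtain ⟨N, q, s, t, h1⟩ := ih
        refine ⟨N + 1, C a * q * X + C t, -(t * e), a * s - t * b, ?_⟩
        rw [← monomial_mul_X]
        simp only [pow_succ, C_mul, C_sub, C_neg] at h1 ⊢
        linear_combination C a * X * h1
  choose N q s t h using fun i => key (f i)
  refine ⟨∑ i, N i, fun i => C (a ^ (∑ k, N k - N i)) * q i, fun i => a ^ (∑ k, N k - N i) * s i,
    fun i => a ^ (∑ k, N k - N i) * t i, fun i => ?_⟩
  have hle : N i ≤ ∑ k, N k := Finset.single_le_sum (fun _ _ => Nat.zero_le _) (Finset.mem_univ i)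
  have : a ^ (∑ k, N k) = a ^ (∑ k, N k - N i) * a ^ N i := by
    rw [← pow_add, Nat.sub_add_cancel hle]
  rw [this]
  simp only [C_mul]
  linear_combination C (a ^ (∑ k, N k - N i)) * h i

end General

/-! ### Values over polynomial rings -/

section OneVariable

open Polynomial

variable {K : Type*} [Field K] {ι κ : Type} [Fintype ι] [Fintype κ]

lemma coeff_zero_eval (c : ι → ι → K) (f : ι → K[X]) :
    (eval (map C c) f).coeff 0 = eval c (fun i => (f i).coeff 0) := by
  have := map_eval (constantCoeff (R := K)) (map C c) f
  simp only [constantCoeff_apply] at this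
  rw [this]
  congr 1
  funext i j
  simp [map]

omit [Fintype ι] in
lemma eq_const_add_X_smul (f : ι → K[X]) :
    f = (X : K[X]) • (fun i => (f i).divX) + fun i => C ((f i).coeff 0) := by
  funext i
  simp only [Pi.add_apply, Pi.smul_apply, smul_eq_mul]
  rw [mul_comm, divX_mul_X_add]

/-- If the constant vector `f(0)` is isotropic and radical, subtracting it from `f` does not change
`c(f)`, so `c(f) = X² c((f - f(0)) / X)`. -/
lemma eval_eq_of_radical (c : ι → ι → K) (f : ι → K[X])
    (h0 : eval c (fun i => (f i).coeff 0) = 0)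
    (hr : ∀ y, polar c (fun i => (f i).coeff 0) y = 0) :
    eval (map C c) f = X ^ 2 * eval (map C c) (fun i => (f i).divX) := by
  have h1 : eval (map C c) (fun i => C ((f i).coeff 0)) = 0 := by
    rw [← map_eval, h0, map_zero]
  have h2 : polar (map C c) (fun i => (f i).divX) (fun i => C ((f i).coeff 0)) = 0 := by
    rw [polar_comm]
    ext n
    have := hr (fun i => ((f i).divX).coeff n)
    simpa only [polar, map, finsetSum_coeff, coeff_C_mul, coeff_add, coeff_zero] using this
  conv_lhs => rw [eq_const_add_X_smul f]
  rw [eval_add, eval_smul, polar_smul_left, h1, h2]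
  ring

/-- If all isotropic vectors of `c` are radical, then the lowest coefficient of a nonzero value of
`c` over `K[X]` is a value of `c` over `K`. -/
lemma trailingCoeff_eval_mem_reps (c : ι → ι → K)
    (hB : ∀ x, eval c x = 0 → ∀ y, polar c x y = 0) (f : ι → K[X])
    (hf : eval (map C c) f ≠ 0) : (eval (map C c) f).trailingCoeff ∈ reps c := by
  induction hn : (eval (map C c) f).natDegree using Nat.strong_induction_on generalizing f with
  | _ n ih =>
    by_cases h0 : eval c (fun i => (f i).coeff 0) = 0
    · have h := eval_eq_of_radical c f h0 (hB _ h0)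
      have hne : eval (map C c) (fun i => (f i).divX) ≠ 0 := by
        intro h'; apply hf; rw [h, h', mul_zero]
      have hlt : (eval (map C c) (fun i => (f i).divX)).natDegree < n := by
        rw [← hn, h, natDegree_mul (pow_ne_zero _ X_ne_zero) hne, natDegree_X_pow]; omega
      have := ih _ hlt _ hne rfl
      rw [h, trailingCoeff_mul]
      have hX : (X ^ 2 : K[X]).trailingCoeff = 1 := by
        rw [← monomial_one_right_eq_X_pow, trailingCoeff, natTrailingDegree_monomial one_ne_zero,
          coeff_monomial_same]
      rwa [hX, one_mul]
    · have h1 := coeff_zero_eval c f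
      rw [trailingCoeff_eq_coeff_zero (by rwa [h1]), h1]
      exact ⟨h0, _, rfl⟩

/-- Anisotropic forms stay anisotropic over `K[X]`. -/
lemma anisotropic_polynomial (c : ι → ι → K) (hc : ¬ IsIsotropic c) (f : ι → K[X])
    (hf : eval (map C c) f = 0) : f = 0 := by
  have key : ∀ (n : ℕ) (f : ι → K[X]), eval (map C c) f = 0 → ∀ i, (f i).natDegree < n →
      f i = 0 := by
    intro n
    induction n with
    | zero => intro f _ i hi; omega
    | succ n ih =>
      intro f hf i hi
      have h0 : eval c (fun i => (f i).coeff 0) = 0 := by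
        rw [← coeff_zero_eval, hf, coeff_zero]
      have hz : (fun i => (f i).coeff 0) = 0 := by
        by_contra hne
        exact hc ⟨_, hne, h0⟩
      have h := eval_eq_of_radical c f h0 (fun y => by rw [hz, polar_comm, polar_zero_right])
      rw [hf] at h
      have h' := (mul_eq_zero.mp h.symm).resolve_left (pow_ne_zero _ X_ne_zero)
      have hi0 : (f i).coeff 0 = 0 := congrFun hz i
      have hfi := divX_mul_X_add (f i)
      rw [hi0, C_0, add_zero] at hfi
      by_cases hd : (f i).natDegree = 0
      · rw [eq_C_of_natDegree_eq_zero hd, hi0, C_0]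
      · have := ih _ h' i (by rw [natDegree_divX_eq_natDegree_tsub_one]; omega)
        rw [← hfi, this, zero_mul]
  funext i
  exact key _ f hf i (Nat.lt_succ_self _)

/-- A nonzero multivariate polynomial over `K` does not vanish identically on the curves
`u : σ → K[X]` passing through a prescribed point at `X = 0`; here `K` may be finite. -/
lemma exists_curve {σ : Type*} (P : MvPolynomial σ K) (hP : P ≠ 0) (v : σ → K) :
    ∃ u : σ → K[X], (∀ k, (u k).coeff 0 = v k) ∧ MvPolynomial.eval₂Hom C u P ≠ 0 := by
  by_contra! hcon
  apply hP
  apply MvPolynomial.map_injective (C : K →+* K[X]) C_injective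
  refine MvPolynomial.funext_set (fun k => {u : K[X] | u.coeff 0 = v k}) (fun k => ?_) ?_
  · refine Set.infinite_of_injective_forall_mem
      (f := fun n : ℕ => C (v k) + (X : K[X]) ^ (n + 1)) ?_ ?_
    · intro m n hmn
      have h : (X : K[X]) ^ (m + 1) = X ^ (n + 1) := by simpa using hmn
      have := congrArg natDegree h
      simpa using this
    · intro n
      simp
  · intro x hx
    have := hcon x (fun k => hx k (Set.mem_univ k))
    rw [MvPolynomial.eval_map, map_zero, map_zero]
    simpa using this

/-- Anisotropic forms stay anisotropic over polynomial rings. -/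
lemma anisotropic_mvPolynomial {σ : Type*} (c : ι → ι → K) (hc : ¬ IsIsotropic c)
    (f : ι → MvPolynomial σ K) (hf : eval (map MvPolynomial.C c) f = 0) : f = 0 := by
  funext i
  by_contra hi
  obtain ⟨u, -, hu⟩ := exists_curve (f i) hi 0
  apply hu
  have h := map_eval (MvPolynomial.eval₂Hom C u) (map MvPolynomial.C c) f
  rw [hf, map_zero] at h
  have hm : map (MvPolynomial.eval₂Hom C u) (map MvPolynomial.C c) = map C c := by
    funext i j; simp [map]
  rw [hm] at h
  exact congrFun (anisotropic_polynomial c hc _ h.symm) i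

end OneVariable

/-! ### The generic similarity -/

section Generic

variable {F : Type*} [Field F] {ι κ : Type} [Fintype ι] [Fintype κ]

/-- Isotropy over the function field, with denominators cleared. -/
lemma exists_polynomial_zero (c : ι → ι → F) (d : κ → κ → F) (hd : Irreducible (poly d))
    (h : IsIsotropic (map (ffHom MvPolynomial.C (poly d)) c)) :
    ∃ f : ι → MvPolynomial κ F, poly d ∣ eval (map MvPolynomial.C c) f ∧
      ∃ i, ¬ poly d ∣ f i := by
  set I := Ideal.span {poly d} with hI
  have hprime : I.IsPrime := (Ideal.span_singleton_prime hd.ne_zero).mpr hd.prime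
  obtain ⟨x, hx0, hx⟩ := h
  obtain ⟨b, hb⟩ := IsLocalization.exist_integer_multiples_of_finite
    (nonZeroDivisors (MvPolynomial κ F ⧸ I)) x
  choose y hy using hb
  choose f hf using fun i => Ideal.Quotient.mk_surjective (y i)
  set α := algebraMap (MvPolynomial κ F ⧸ I) (FractionRing (MvPolynomial κ F ⧸ I))
  have hα : Function.Injective α := IsFractionRing.injective _ _
  have hyx : (fun i => α (y i)) = α b • x := by
    funext i
    rw [hy i, Pi.smul_apply, Algebra.smul_def, smul_eq_mul]
  refine ⟨f, ?_, ?_⟩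
  · rw [← Ideal.mem_span_singleton, ← Ideal.Quotient.eq_zero_iff_mem]
    apply hα
    rw [map_zero, map_eval, map_eval]
    rw [show (fun i => α (Ideal.Quotient.mk I (f i))) = α b • x by rw [← hyx]; simp only [hf], eval_smul]
    have : map α (map (Ideal.Quotient.mk I) (map MvPolynomial.C c))
        = map (ffHom MvPolynomial.C (poly d)) c := rfl
    rw [this, hx, mul_zero]
  · by_contra! hall
    apply hx0
    have hy0 : ∀ i, y i = 0 := fun i => by
      rw [← hf i, Ideal.Quotient.eq_zero_iff_mem, Ideal.mem_span_singleton]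
      exact hall i
    funext i
    have h1 := congrFun hyx i
    simp only [hy0, map_zero, Pi.smul_apply, smul_eq_mul] at h1
    exact (mul_eq_zero.mp h1.symm).resolve_left
      ((map_ne_zero_iff α hα).mpr (nonZeroDivisors.ne_zero b.2))

omit [Fintype κ] in
/-- Extending scalars by new variables `X`, a polynomial `P(Y)` dividing `g(X) f(Y)` with `g ≠ 0`
already divides `f(Y)`: compare coefficients in `X`. -/
lemma dvd_of_dvd_generic_mul (P f : MvPolynomial κ F) (g : MvPolynomial κ F) (hg : g ≠ 0)
    (Q : MvPolynomial κ (MvPolynomial κ F))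
    (h : MvPolynomial.map MvPolynomial.C g * MvPolynomial.C f = Q * MvPolynomial.C P) :
    P ∣ f := by
  obtain ⟨m, hm⟩ := MvPolynomial.ne_zero_iff.mp hg
  have h1 := congrArg (MvPolynomial.coeff m) h
  rw [mul_comm, mul_comm Q, MvPolynomial.coeff_C_mul, MvPolynomial.coeff_C_mul,
    MvPolynomial.coeff_map, mul_comm] at h1
  have hu : IsUnit (MvPolynomial.C (σ := κ) (MvPolynomial.coeff m g)) :=
    (IsUnit.mk0 _ hm).map MvPolynomial.C
  exact (hu.dvd_mul_left).mp ⟨_, h1⟩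

/-- Let `x`, `y` be points over a domain `R`. If `d` divides a value `c(f)` in the polynomial ring,
then the remainder `r₀ + r₁ T` of `f` on the line `x T + y` modulo the restriction of `d` satisfies
`c(r₁) = l d(x)` and `c(r₀) = l d(y)` for a common factor `l`. -/
lemma line_remainder {R : Type*} [CommRing R] [IsDomain R] (γ : F →+* R) (c : ι → ι → F)
    (d : κ → κ → F) (x y : κ → R) (hx : eval (map γ d) x ≠ 0) (f : ι → MvPolynomial κ F)
    (hf : poly d ∣ eval (map MvPolynomial.C c) f) (j : MvPolynomial κ F →+* Polynomial R)
    (hj : j = MvPolynomial.eval₂Hom (Polynomial.C.comp γ)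
      ((Polynomial.X : Polynomial R) • (fun k => Polynomial.C (x k)) + fun k => Polynomial.C (y k))) :
    ∃ (N : ℕ) (q : ι → Polynomial R) (l : R) (r₀ r₁ : ι → R),
      (∀ i, Polynomial.C (eval (map γ d) x ^ N) * j (f i)
        = q i * j (poly d) + (Polynomial.C (r₀ i) + Polynomial.C (r₁ i) * Polynomial.X)) ∧
      eval (map γ c) r₁ = l * eval (map γ d) x ∧ eval (map γ c) r₀ = l * eval (map γ d) y := by
  set cR := map γ c with hcR
  set a := eval (map γ d) x with ha
  set b := polar (map γ d) x y with hb
  set e := eval (map γ d) y with he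
  set p : Polynomial R :=
    Polynomial.C a * Polynomial.X ^ 2 + Polynomial.C b * Polynomial.X + Polynomial.C e with hp
  have hjc : map j (map MvPolynomial.C c) = map Polynomial.C cR := by
    funext i k; simp [map, hj, hcR]
  have hjd : j (poly d) = p := by
    have hm : map ((Polynomial.C : R →+* Polynomial R).comp γ) d
      = map Polynomial.C (map γ d) := rfl
    rw [hj, eval₂Hom_poly, hm, eval_add, eval_smul, polar_smul_left, ← map_eval, ← map_eval,
      ← map_polar, hp]
    ring
  obtain ⟨N, q, r₀, r₁, hdiv⟩ := pseudo_div a b e (fun i => j (f i))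
  have hdvd : p ∣ eval (map Polynomial.C cR) (fun i => Polynomial.C (r₀ i) +
      Polynomial.C (r₁ i) * Polynomial.X) := by
    rw [← Ideal.mem_span_singleton, ← Ideal.Quotient.eq_zero_iff_mem]
    refine (map_eval (Ideal.Quotient.mk (Ideal.span {p})) _ _).trans ?_
    have hv : (fun i => Ideal.Quotient.mk (Ideal.span {p}) (Polynomial.C (r₀ i) +
        Polynomial.C (r₁ i) * Polynomial.X)) = fun i => Ideal.Quotient.mk (Ideal.span {p})
        ((Polynomial.C (a ^ N) • fun i => j (f i)) i) := by
      funext i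
      rw [Ideal.Quotient.mk_eq_mk_iff_sub_mem, Ideal.mem_span_singleton]
      refine ⟨-q i, ?_⟩
      simp only [Pi.smul_apply, smul_eq_mul]
      rw [hdiv i]
      ring
    rw [hv]
    refine (map_eval (Ideal.Quotient.mk (Ideal.span {p})) _ _).symm.trans ?_
    rw [Ideal.Quotient.eq_zero_iff_mem, Ideal.mem_span_singleton, eval_smul, ← hjc, ← map_eval,
      ← hjd]
    exact Dvd.dvd.mul_left (map_dvd j hf) _
  have hexp : eval (map Polynomial.C cR) (fun i => Polynomial.C (r₀ i) +
      Polynomial.C (r₁ i) * Polynomial.X) = Polynomial.C (eval cR r₁) * Polynomial.X ^ 2 +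
      Polynomial.C (polar cR r₁ r₀) * Polynomial.X + Polynomial.C (eval cR r₀) := by
    have hv : (fun i => Polynomial.C (r₀ i) + Polynomial.C (r₁ i) * Polynomial.X)
        = (Polynomial.X : Polynomial R) • (fun i => Polynomial.C (r₁ i))
          + fun i => Polynomial.C (r₀ i) := by
      funext i
      simp only [Pi.add_apply, Pi.smul_apply, smul_eq_mul]
      ring
    rw [hv, eval_add, eval_smul, polar_smul_left, ← map_eval, ← map_eval, ← map_polar]
    ring
  obtain ⟨s, hs⟩ := hdvd
  rw [hexp] at hs
  have hpdeg : p.natDegree = 2 := Polynomial.natDegree_quadratic hx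
  have hp0 : p ≠ 0 := by intro h0; rw [h0] at hpdeg; simp at hpdeg
  have hsdeg : s.natDegree = 0 := by
    by_cases hs0 : s = 0
    · simp [hs0]
    · have h1 := Polynomial.natDegree_mul hp0 hs0
      rw [← hs] at h1
      have h2 := Polynomial.natDegree_quadratic_le (a := eval cR r₁) (b := polar cR r₁ r₀)
        (c := eval cR r₀)
      omega
  obtain ⟨l, rfl⟩ : ∃ l, s = Polynomial.C l :=
    ⟨_, Polynomial.eq_C_of_natDegree_eq_zero hsdeg⟩
  rw [hp] at hs
  refine ⟨N, q, l, r₀, r₁, fun i => by rw [hjd, hdiv i], ?_, ?_⟩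
  · have := congrArg (fun g => Polynomial.coeff g 2) hs
    rw [mul_comm l]
    simpa [Polynomial.coeff_X, Polynomial.coeff_C] using this
  · have := congrArg (fun g => Polynomial.coeff g 0) hs
    rw [mul_comm l]
    simpa using this

/-- For generic points `X`, `Y`, the form `c` represents a common nonzero multiple `l` of `d(X)`
and of `d(Y)`, since it becomes isotropic on the quadratic extension cut out by the restriction of
`d` to the line through them. -/
lemma generic_similarity (c : ι → ι → F) (d : κ → κ → F) (hc : ¬ IsIsotropic c)
    (hd : Irreducible (poly d)) (h : IsIsotropic (map (ffHom MvPolynomial.C (poly d)) c)) :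
    ∃ (l : MvPolynomial (κ ⊕ κ) F) (r₀ r₁ : ι → MvPolynomial (κ ⊕ κ) F), l ≠ 0 ∧
      eval (map MvPolynomial.C c) r₁
        = l * eval (map MvPolynomial.C d) (fun k => MvPolynomial.X (Sum.inl k)) ∧
      eval (map MvPolynomial.C c) r₀
        = l * eval (map MvPolynomial.C d) (fun k => MvPolynomial.X (Sum.inr k)) := by
  obtain ⟨f, hf, i₀, hi₀⟩ := exists_polynomial_zero c d hd h
  let ρ : MvPolynomial (κ ⊕ κ) F →+* MvPolynomial κ (MvPolynomial κ F) :=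
    MvPolynomial.eval₂Hom (MvPolynomial.C.comp MvPolynomial.C)
      (Sum.elim MvPolynomial.X (fun k => MvPolynomial.C (MvPolynomial.X k)))
  have hρC : ∀ r, ρ (MvPolynomial.C r) = MvPolynomial.C (MvPolynomial.C r) := fun r => by
    simp [ρ, MvPolynomial.eval₂Hom_C]
  have hρl : ∀ k, ρ (MvPolynomial.X (Sum.inl k)) = MvPolynomial.X k := fun k => by
    simp [ρ, MvPolynomial.eval₂Hom_X']
  have hρr : ∀ k, ρ (MvPolynomial.X (Sum.inr k)) = MvPolynomial.C (MvPolynomial.X k) := fun k => by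
    simp [ρ, MvPolynomial.eval₂Hom_X']
  have hρa : ρ (eval (map MvPolynomial.C d) (fun k => MvPolynomial.X (Sum.inl k)))
      = MvPolynomial.map MvPolynomial.C (poly d) := by
    rw [poly_eq_eval, map_eval, map_eval]
    congr 1
    · funext i k; simp only [map, hρC, MvPolynomial.map_C]
    · funext k; simp only [hρl, MvPolynomial.map_X]
  have ha0 : eval (map MvPolynomial.C d)
      (fun k => (MvPolynomial.X (Sum.inl k) : MvPolynomial (κ ⊕ κ) F)) ≠ 0 := by
    intro h0
    rw [h0, map_zero] at hρa
    exact hd.ne_zero (MvPolynomial.map_injective _ (MvPolynomial.C_injective _ _)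
      (by rw [← hρa, map_zero]))
  obtain ⟨N, q, l, r₀, r₁, hdiv, e1, e0⟩ := line_remainder MvPolynomial.C c d _
    (fun k => MvPolynomial.X (Sum.inr k)) ha0 f hf _ rfl
  refine ⟨l, r₀, r₁, ?_, e1, e0⟩
  intro hl
  rw [hl, zero_mul] at e1 e0
  have z1 := anisotropic_mvPolynomial c hc r₁ e1
  have z0 := anisotropic_mvPolynomial c hc r₀ e0
  -- the remainder vanishes; setting `T = 0` contradicts the choice of `f`
  apply hi₀
  have hdi := hdiv i₀
  rw [z0, z1] at hdi
  simp only [Pi.zero_apply, map_zero, zero_mul, add_zero] at hdi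
  have hT : ∀ g, Polynomial.eval₂RingHom ρ 0 (MvPolynomial.eval₂Hom
      (Polynomial.C.comp MvPolynomial.C)
      ((Polynomial.X : Polynomial (MvPolynomial (κ ⊕ κ) F)) •
        (fun k => Polynomial.C (MvPolynomial.X (Sum.inl k))) +
        fun k => Polynomial.C (MvPolynomial.X (Sum.inr k))) g) = MvPolynomial.C g := by
    intro g
    rw [← RingHom.comp_apply]
    congr 1
    apply MvPolynomial.ringHom_ext
    · intro r
      simp [hρC]
    · intro k
      simp [hρr]
  have hTa : ∀ g, Polynomial.eval₂RingHom ρ 0 (Polynomial.C g) = ρ g := fun g => by simp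
  have := congrArg (Polynomial.eval₂RingHom ρ 0) hdi
  rw [map_mul, map_mul, hT, hT, hTa, map_pow, hρa, ← map_pow] at this
  exact dvd_of_dvd_generic_mul _ _ _ (pow_ne_zero _ hd.ne_zero) _ this

end Generic

/-! ### Universal forms and specialization -/

section Field

variable {K : Type*} [Field K] {ι κ : Type} [Fintype ι] [Fintype κ]

/-- A form with an isotropic vector outside the radical is universal. -/
lemma exists_eval_eq_of_isotropic (c : ι → ι → K) (x y : ι → K) (hx : eval c x = 0)
    (hxy : polar c x y ≠ 0) (t : K) : ∃ z, eval c z = t := by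
  refine ⟨((t - eval c y) / polar c x y) • x + y, ?_⟩
  rw [eval_add, eval_smul, hx, polar_smul_left]
  field_simp
  ring

lemma mem_reps_mul_sq (c : ι → ι → K) {s t : K} (hs : s ∈ reps c) (ht : t ≠ 0) :
    t ^ 2 * s ∈ reps c := by
  obtain ⟨hs0, x, hx⟩ := hs
  exact ⟨mul_ne_zero (pow_ne_zero _ ht) hs0, t • x, by rw [eval_smul, hx]⟩

lemma mul_mem_repsPow_two (c : ι → ι → K) {s t : K} (hs : s ∈ reps c) (ht : t ∈ reps c) :
    s * t ∈ repsPow c 2 := by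
  refine ⟨![s, t], ?_, by simp [Fin.prod_univ_two]⟩
  intro k
  fin_cases k
  · exact hs
  · exact ht

/-- If `l d(X)` and `l d(Y)` are values of `c` over a polynomial ring, and isotropic vectors of
`c` over `K` are radical, then for nonzero values `d(v)`, `d(w)` over `K` there is `t ≠ 0` such that both
`t d(v)` and `t d(w)` are values of `c`. -/
lemma specialize_similarity {F : Type*} [Field F] (σ : F →+* K) (c : ι → ι → F) (d : κ → κ → F)
    (hB : ∀ x, eval (map σ c) x = 0 → ∀ y, polar (map σ c) x y = 0)
    (l : MvPolynomial (κ ⊕ κ) F) (r₀ r₁ : ι → MvPolynomial (κ ⊕ κ) F) (hl : l ≠ 0)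
    (h₁ : eval (map MvPolynomial.C c) r₁
        = l * eval (map MvPolynomial.C d) (fun k => MvPolynomial.X (Sum.inl k)))
    (h₀ : eval (map MvPolynomial.C c) r₀
        = l * eval (map MvPolynomial.C d) (fun k => MvPolynomial.X (Sum.inr k)))
    (v w : κ → K) (hv : eval (map σ d) v ≠ 0) (hw : eval (map σ d) w ≠ 0) :
    ∃ t : K, t ≠ 0 ∧ t * eval (map σ d) v ∈ reps (map σ c) ∧
      t * eval (map σ d) w ∈ reps (map σ c) := by
  have hl' : MvPolynomial.map σ l ≠ 0 := by
    intro h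
    exact hl (MvPolynomial.map_injective σ σ.injective (by rw [h, map_zero]))
  obtain ⟨u, hu, hul⟩ := exists_curve _ hl' (Sum.elim v w)
  set τ : MvPolynomial (κ ⊕ κ) F →+* Polynomial K :=
    (MvPolynomial.eval₂Hom Polynomial.C u).comp (MvPolynomial.map σ) with hτ
  have hτc : map τ (map MvPolynomial.C c) = map Polynomial.C (map σ c) := by
    funext i j; simp [map, hτ]
  have hτd : map τ (map MvPolynomial.C d) = map Polynomial.C (map σ d) := by
    funext i j; simp [map, hτ]
  have hτX : ∀ k, τ (MvPolynomial.X k) = u k := fun k => by simp [hτ]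
  have hτl : τ l ≠ 0 := hul
  have key : ∀ (r : ι → MvPolynomial (κ ⊕ κ) F) (g : κ → κ ⊕ κ),
      eval (map MvPolynomial.C c) r
        = l * eval (map MvPolynomial.C d) (fun k => MvPolynomial.X (g k)) →
      eval (map σ d) (fun k => (u (g k)).coeff 0) ≠ 0 →
      (τ l).trailingCoeff * eval (map σ d) (fun k => (u (g k)).coeff 0) ∈ reps (map σ c) := by
    intro r g hr hne
    have h := congrArg τ hr
    rw [map_mul, map_eval, map_eval, hτc, hτd] at h
    simp only [hτX] at h
    rw [← coeff_zero_eval] at hne ⊢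
    have hne' : eval (map Polynomial.C (map σ d)) (fun k => u (g k)) ≠ 0 := by
      intro h0; rw [h0] at hne; simp at hne
    rw [← Polynomial.trailingCoeff_eq_coeff_zero hne, ← Polynomial.trailingCoeff_mul, ← h]
    exact trailingCoeff_eval_mem_reps _ hB _ (by rw [h]; exact mul_ne_zero hτl hne')
  have e1 : (fun k => (u (Sum.inl k)).coeff 0) = v := by funext k; rw [hu]; rfl
  have e0 : (fun k => (u (Sum.inr k)).coeff 0) = w := by funext k; rw [hu]; rfl
  refine ⟨(τ l).trailingCoeff, ?_, ?_, ?_⟩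
  · rwa [Ne, Polynomial.trailingCoeff_eq_zero]
  · have := key r₁ Sum.inl h₁
    rw [e1] at this
    exact this hv
  · have := key r₀ Sum.inr h₀
    rw [e0] at this
    exact this hw

end Field

/-- Let `φ`, `ψ` be nondefective quadratic forms over a field `F` of
characteristic 2, and let `𝓔` be the class of all field extensions `E/F` satisfying
`i_d(φ_E) = 0` in case `ψ` is quasilinear, and of all field extensions `E/F`
otherwise.  If `φ_{F(ψ)}` is isotropic, then `D_E^*(ψ)² ⊆ D_E^*(φ)²` for every
`E ∈ 𝓔`. -/
theorem stmt12 {F : Type u} [Field F] [CharP F 2] {ι κ : Type} [Fintype ι] [Fintype κ]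
    (c : ι → ι → F) (d : κ → κ → F)
    (hc : IsNondefective c) (hd : IsNondefective d)
    (hiso : IsotropicOverFunField c d)
    (E : Type u) [Field E] (σ : F →+* E)
    (hE : IsQuasilinear d → IsNondefective (map σ c)) :
    repsPow (map σ d) 2 ⊆ repsPow (map σ c) 2 := by
  rintro _ ⟨z, hz, rfl⟩
  rw [Fin.prod_univ_two]
  obtain ⟨hz0, v, hv⟩ := hz 0
  obtain ⟨hz1, w, hw⟩ := hz 1
  by_cases hA : ∃ x y, eval (map σ c) x = 0 ∧ polar (map σ c) x y ≠ 0
  · obtain ⟨x, y, hx, hxy⟩ := hA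
    exact mul_mem_repsPow_two _ ⟨hz0, exists_eval_eq_of_isotropic _ x y hx hxy _⟩
      ⟨hz1, exists_eval_eq_of_isotropic _ x y hx hxy _⟩
  · push Not at hA
    -- a hyperbolic plane over `F` would persist over `E`
    have hani : ¬ IsIsotropic c := by
      rintro ⟨x, hx0, hx⟩
      apply hx0
      refine hc x (fun y => ?_) hx
      apply σ.injective
      rw [map_zero, map_polar]
      exact hA _ _ (by rw [← map_eval, hx, map_zero])
    have hirr : Irreducible (poly d) := by
      by_contra h
      exact hani (hiso.2 h)
    obtain ⟨l, r₀, r₁, hl, h₁, h₀⟩ := generic_similarity c d hani hirr (hiso.1 hirr)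
    obtain ⟨t, ht, m1, m0⟩ := specialize_similarity σ c d (fun x hx y => hA x y hx) l r₀ r₁ hl
      h₁ h₀ v w (by rwa [hv]) (by rwa [hw])
    rw [hv] at m1
    rw [hw] at m0
    have := mul_mem_repsPow_two _ (mem_reps_mul_sq _ m1 (inv_ne_zero ht)) m0
    convert this using 1
    field_simp

end QF2
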